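/- arXiv:1406.0989 — 3 statements merged into one kernel-verified Lean document; each statement's English description precedes it below -/
import Mathlib

section
/- Let a > 0 and let g, h be continuous functions on [a,∞) with h positive on [a,∞) and h ∈ NRV_γ for some γ > 1, and suppose lim_{u→∞} g(u)/h(u) = 1. Let T > 0 and let v, w : (0,T] → [a,∞) be differentiable functions satisfying v'(t) = −g(v(t)) and w'(t) = −h(w(t)) for all t ∈ (0,T], with v(t) → ∞ and w(t) → ∞ as t → 0⁺. Then lim_{t→0⁺} v(t)/w(t) = 1. -/
open Filter MeasureTheory Set Topology

noncomputable section

/-- `f` is normalized regularly varying at infinity of index `ρ`. -/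
def IsNRV (f : ℝ → ℝ) (ρ : ℝ) : Prop :=
  ∃ b : ℝ, 0 < b ∧ ∃ Mstar : ℝ, 0 < Mstar ∧ ∃ φ : ℝ → ℝ,
    ContinuousOn φ (Ici b) ∧ Tendsto φ atTop (𝓝 0) ∧
    ∀ u, b ≤ u → f u = Mstar * u ^ ρ * Real.exp (∫ t in b..u, φ t / t)

/-- Let `h ∈ NRV_γ`, `γ > 1`, be positive and continuous on `[a,∞)`, `g` continuous
on `[a,∞)` with `g/h → 1` at infinity. If `v, w` solve `v' = -g(v)`, `w' = -h(w)` on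
`(0,T]` with `v, w → ∞` as `t → 0⁺`, then `v(t)/w(t) → 1` as `t → 0⁺`. -/
theorem blowup_ode_asymptotic_equivalence (a γ : ℝ) (ha : 0 < a) (hγ : 1 < γ)
    (g h : ℝ → ℝ)
    (hgc : ContinuousOn g (Ici a)) (hhc : ContinuousOn h (Ici a))
    (hhpos : ∀ u, a ≤ u → 0 < h u) (hNRV : IsNRV h γ)
    (hlim : Tendsto (fun u => g u / h u) atTop (𝓝 1))
    (T : ℝ) (hT : 0 < T) (v w : ℝ → ℝ)
    (hva : ∀ t ∈ Ioc (0:ℝ) T, a ≤ v t) (hwa : ∀ t ∈ Ioc (0:ℝ) T, a ≤ w t)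
    (hv : ∀ t ∈ Ioc (0:ℝ) T, HasDerivAt v (-(g (v t))) t)
    (hw : ∀ t ∈ Ioc (0:ℝ) T, HasDerivAt w (-(h (w t))) t)
    (hv0 : Tendsto v (𝓝[>] (0:ℝ)) atTop) (hw0 : Tendsto w (𝓝[>] (0:ℝ)) atTop) :
    Tendsto (fun t => v t / w t) (𝓝[>] (0:ℝ)) (𝓝 1) := by
  obtain ⟨b, hb, M, hM, φ, hφc, hφ0, hrep⟩ := hNRV
  set A := max a b with hA
  have haA : a ≤ A := le_max_left _ _
  have hbA : b ≤ A := le_max_right _ _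
  set β := (γ - 1) / 2 with hβ
  have hβ0 : 0 < β := by rw [hβ]; linarith
  -- derivative of h
  have hder : ∀ u, A < u → HasDerivAt h (h u * ((γ + φ u) / u)) u := by
    intro u hu
    have hu0 : 0 < u := by linarith
    have hcont : ContinuousOn (fun t => φ t / t) (Ici b) :=
      hφc.div continuousOn_id (fun x hx => by
        have : b ≤ x := hx
        exact (hb.trans_le this).ne')
    have hnh : Ici b ∈ 𝓝 u := Ici_mem_nhds (by linarith)
    have h1 : HasDerivAt (fun u => ∫ t in b..u, φ t / t) (φ u / u) u := by
      apply intervalIntegral.integral_hasDerivAt_right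
      · apply ContinuousOn.intervalIntegrable
        apply hcont.mono
        rw [uIcc_of_le (by linarith)]
        exact Icc_subset_Ici_self
      · exact (hcont.mono Ioi_subset_Ici_self).stronglyMeasurableAtFilter isOpen_Ioi u
          (show b < u by linarith)
      · exact hcont.continuousAt hnh
    have h2 := ((Real.hasDerivAt_rpow_const (p := γ) (Or.inl hu0.ne')).const_mul M).mul h1.exp
    have h3 : h =ᶠ[𝓝 u] fun u => M * u ^ γ * Real.exp (∫ t in b..u, φ t / t) := by
      filter_upwards [hnh] with x hx using hrep x hx
    refine HasDerivAt.congr_of_eventuallyEq ?_ h3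
    refine HasDerivAt.congr_deriv h2 ?_
    rw [hrep u (by linarith), Real.rpow_sub_one hu0.ne']
    field_simp
  set H : ℝ → ℝ := fun u => ∫ t in A..u, (h t)⁻¹ with hH
  have hHder : ∀ u, A < u → HasDerivAt H (h u)⁻¹ u := by
    intro u hu
    have hcont : ContinuousOn (fun t => (h t)⁻¹) (Ici A) :=
      (hhc.mono (Ici_subset_Ici.2 haA)).inv₀ (fun x hx =>
        (hhpos x (haA.trans hx)).ne')
    apply intervalIntegral.integral_hasDerivAt_right
    · apply ContinuousOn.intervalIntegrable
      apply hcont.mono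
      rw [uIcc_of_le hu.le]
      exact Icc_subset_Ici_self
    · exact (hcont.mono Ioi_subset_Ici_self).stronglyMeasurableAtFilter isOpen_Ioi u hu
    · exact hcont.continuousAt (Ici_mem_nhds hu)
  obtain ⟨U, hUA, hUφ⟩ : ∃ U, A < U ∧ ∀ u, U ≤ u → -β ≤ φ u := by
    have h1 := hφ0.eventually (lt_mem_nhds (show -β < 0 by linarith))
    obtain ⟨N, hN⟩ := eventually_atTop.1 h1
    exact ⟨max N (A + 1), lt_of_lt_of_le (by linarith) (le_max_right _ _),
      fun u hu => (hN u ((le_max_left _ _).trans hu)).le⟩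
  have hU0 : 0 < U := by linarith
  have hpos : ∀ u, U ≤ u → 0 < h u := fun u hu => hhpos u (by linarith)
  -- small interval
  have hT0 : ∀ᶠ t in 𝓝[>] (0:ℝ), t ∈ Ioo 0 T := Ioo_mem_nhdsGT hT
  obtain ⟨d, hd0, hd⟩ : ∃ d, 0 < d ∧ ∀ t ∈ Ioo 0 d, t ∈ Ioo 0 T ∧ U < w t ∧ U < v t := by
    have := hT0.and ((hw0.eventually_gt_atTop U).and (hv0.eventually_gt_atTop U))
    obtain ⟨d, hd, h⟩ := (mem_nhdsGT_iff_exists_Ioo_subset).1 this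
    exact ⟨d, hd, fun t ht => h ht⟩
  have hdmem : ∀ᶠ t in 𝓝[>] (0:ℝ), t ∈ Ioo 0 d := Ioo_mem_nhdsGT hd0
  have hmem : ∀ t ∈ Ioo 0 d, t ∈ Ioc 0 T := fun t ht => Ioo_subset_Ioc_self (hd t ht).1
  have hk : ∀ t ∈ Ioo 0 d, HasDerivAt (fun t => H (w t) + t) 0 t := by
    intro t ht
    have hwt := (hd t ht).2.1
    have h1 := ((hHder (w t) (hUA.trans hwt)).comp t (hw t (hmem t ht))).add (hasDerivAt_id t)
    refine HasDerivAt.congr_deriv h1 ?_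
    have := (hpos _ hwt.le).ne'
    field_simp
    ring
  obtain ⟨C, hC⟩ : ∃ C, ∀ t ∈ Ioo 0 d, H (w t) + t = C := by
    apply isOpen_Ioo.exists_is_const_of_deriv_eq_zero isPreconnected_Ioo
    · intro t ht
      exact (hk t ht).differentiableAt.differentiableWithinAt
    · intro t ht
      exact (hk t ht).deriv
  set F : ℝ → ℝ := fun u => C - H u with hF
  have hFder : ∀ u, U ≤ u → HasDerivAt F (-(h u)⁻¹) u := fun u hu =>
    (hHder u (by linarith)).const_sub C
  have hFw : ∀ t ∈ Ioo 0 d, F (w t) = t := by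
    intro t ht
    have := hC t ht
    simp only [hF]; linarith
  have anti : ∀ (f f' : ℝ → ℝ), (∀ u, U ≤ u → HasDerivAt f (f' u) u) →
      (∀ u, U ≤ u → f' u ≤ 0) → AntitoneOn f (Ici U) := by
    intro f f' h1 h2
    apply antitoneOn_of_deriv_nonpos (convex_Ici U)
    · exact fun u hu => (h1 u hu).continuousAt.continuousWithinAt
    · intro u hu
      rw [interior_Ici] at hu
      exact (h1 u (le_of_lt hu)).differentiableAt.differentiableWithinAt
    · intro u hu
      rw [interior_Ici] at hu
      rw [(h1 u (le_of_lt hu)).deriv]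
      exact h2 u (le_of_lt hu)
  have hFanti : AntitoneOn F (Ici U) := anti F _ hFder (fun u hu => by
    have := inv_pos.2 (hpos u hu)
    linarith)
  have hFpos : ∀ u, U ≤ u → 0 < F u := by
    intro u hu
    obtain ⟨t, ht, htd⟩ := ((hw0.eventually_ge_atTop u).and hdmem).exists
    have h1 : F (w t) ≤ F u := hFanti hu (hu.trans ht) ht
    rw [hFw t htd] at h1
    exact htd.1.trans_le h1
  have hF0 : Tendsto F atTop (𝓝 0) := by
    rw [Metric.tendsto_atTop]
    intro ε hε
    have hm : min (d/2) (ε/2) ∈ Ioo 0 d := ⟨by positivity, (min_le_left _ _).trans_lt (by linarith)⟩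
    refine ⟨w (min (d/2) (ε/2)), fun u hu => ?_⟩
    have hUw := (hd _ hm).2.1
    have h1 := hFanti (show U ≤ _ from hUw.le) (show U ≤ u from hUw.le.trans hu) hu
    rw [hFw _ hm] at h1
    have h2 := hFpos u (hUw.le.trans hu)
    rw [Real.dist_eq, sub_zero, abs_of_pos h2]
    have := min_le_right (d/2) (ε/2)
    linarith
  -- β F ≤ u / h
  have hqanti : AntitoneOn (fun u => u / h u - β * F u) (Ici U) := by
    apply anti _ (fun u => (1 * h u - u * (h u * ((γ + φ u) / u))) / (h u)^2 - β * (-(h u)⁻¹))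
    · intro u hu
      exact ((hasDerivAt_id u).div (hder u (by linarith)) (hpos u hu).ne').sub
        ((hFder u hu).const_mul β)
    · intro u hu
      have hu0 : 0 < u := by linarith
      have hp := hpos u hu
      have e : (1 * h u - u * (h u * ((γ + φ u) / u))) / (h u)^2 - β * (-(h u)⁻¹)
          = (1 - (γ + φ u) + β) * (h u)⁻¹ := by
        field_simp
        ring
      rw [e]
      apply mul_nonpos_of_nonpos_of_nonneg _ (inv_pos.2 hp).le
      have := hUφ u hu
      rw [hβ] at this ⊢
      linarith
  have hq : ∀ u, U ≤ u → β * F u ≤ u / h u := by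
    intro u hu
    have h1 : Tendsto (fun s => -(β * F s)) atTop (𝓝 0) := by
      simpa using (hF0.const_mul β).neg
    have h2 : 0 ≤ u / h u - β * F u := by
      apply le_of_tendsto h1
      filter_upwards [eventually_ge_atTop u] with s hs
      have h3 := hqanti (show U ≤ u from hu) (show U ≤ s from hu.trans hs) hs
      have h4 : 0 < s / h s := div_pos (by linarith) (hpos s (hu.trans hs))
      simp only at h3
      linarith
    linarith
  have hlog : AntitoneOn (fun u => Real.log (F u) + β * Real.log u) (Ici U) := by
    apply anti _ (fun u => -(h u)⁻¹ / F u + β * u⁻¹)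
    · intro u hu
      exact ((hFder u hu).log (hFpos u hu).ne').add
        ((Real.hasDerivAt_log (by linarith)).const_mul β)
    · intro u hu
      have hu0 : 0 < u := by linarith
      have hp := hpos u hu
      have hfp := hFpos u hu
      have h1 := hq u hu
      rw [le_div_iff₀ hp] at h1
      have e : -(h u)⁻¹ / F u + β * u⁻¹ = (β * F u * h u - u) / (h u * F u * u) := by
        field_simp
        ring
      rw [e]
      exact div_nonpos_of_nonpos_of_nonneg (by linarith) (by positivity)
  -- F (v t) / t → 1
  have hratio : Tendsto (fun t => F (v t) / t) (𝓝[>] (0:ℝ)) (𝓝 1) := by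
    apply HasDerivAt.lhopital_zero_nhdsGT (f' := fun t => g (v t) / h (v t)) (g' := fun _ => 1)
    · filter_upwards [hdmem] with t ht
      have h1 := (hFder (v t) (hd t ht).2.2.le).comp t (hv t (hmem t ht))
      refine HasDerivAt.congr_deriv h1 ?_
      rw [neg_mul_neg, div_eq_inv_mul]
    · exact Eventually.of_forall fun t => hasDerivAt_id t
    · exact Eventually.of_forall fun t => one_ne_zero
    · exact hF0.comp hv0
    · exact tendsto_id.mono_left nhdsWithin_le_nhds
    · simpa only [div_one, Function.comp_def] using hlim.comp hv0
  have hlr : Tendsto (fun t => |Real.log (F (v t) / t)| / β) (𝓝[>] (0:ℝ)) (𝓝 0) := by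
    have := ((hratio.log one_ne_zero).abs).div_const β
    simpa using this
  have key : ∀ x y, U ≤ x → x ≤ y →
      β * (Real.log y - Real.log x) ≤ Real.log (F x) - Real.log (F y) := by
    intro x y hx hxy
    have := hlog (show U ≤ x from hx) (show U ≤ y from hx.trans hxy) hxy
    simp only at this
    linarith
  have hvw : Tendsto (fun t => Real.log (v t / w t)) (𝓝[>] (0:ℝ)) (𝓝 0) := by
    apply squeeze_zero_norm' _ hlr
    filter_upwards [hdmem] with t ht
    obtain ⟨-, hwt, hvt⟩ := hd t ht
    have hfw := hFw t ht
    rw [Real.norm_eq_abs, le_div_iff₀ hβ0, Real.log_div (by linarith) (by linarith),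
      Real.log_div (hFpos _ hvt.le).ne' ht.1.ne']
    rcases le_total (v t) (w t) with hle | hle
    · have h1 := key _ _ hvt.le hle
      rw [hfw] at h1
      have h2 := Real.log_le_log (by linarith) hle
      rw [abs_of_nonpos (by linarith)]
      have := le_abs_self (Real.log (F (v t)) - Real.log t)
      linarith
    · have h1 := key _ _ hwt.le hle
      rw [hfw] at h1
      have h2 := Real.log_le_log (by linarith) hle
      rw [abs_of_nonneg (by linarith)]
      have := neg_abs_le (Real.log (F (v t)) - Real.log t)
      linarith
  have hexp := (Real.continuous_exp.tendsto 0).comp hvw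
  rw [Real.exp_zero] at hexp
  refine hexp.congr' ?_
  filter_upwards [hdmem] with t ht
  obtain ⟨-, hwt, hvt⟩ := hd t ht
  exact Real.exp_log (div_pos (by linarith) (by linarith))
end
end

section
/- Let a > 0 and let g, h be continuous functions on [a,∞) with h positive on [a,∞) and h ∈ RV_γ for some γ > 1, and suppose lim_{u→∞} g(u)/h(u) = 1. Let T > 0 and let v, w : (0,T] → [a,∞) be differentiable functions satisfying v'(t) = −g(v(t)) and w'(t) = −h(w(t)) for all t ∈ (0,T], with v(t) → ∞ and w(t) → ∞ as t → 0⁺. Then lim_{t→0⁺} v(t)/w(t) = 1. -/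
open Filter MeasureTheory Set Topology

noncomputable section

/-- `f` is regularly varying at infinity of index `ρ`. -/
def IsRV (f : ℝ → ℝ) (ρ : ℝ) : Prop :=
  ∀ ξ : ℝ, 0 < ξ → Tendsto (fun u => f (ξ * u) / f u) atTop (𝓝 (ξ ^ ρ))

/-- Let `h ∈ RV_γ`, `γ > 1`, be positive and continuous on `[a,∞)`, `g` continuous
on `[a,∞)` with `g/h → 1` at infinity. If `v, w` solve `v' = -g(v)`, `w' = -h(w)` on
`(0,T]` with `v, w → ∞` as `t → 0⁺`, then `v(t)/w(t) → 1` as `t → 0⁺`. -/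
theorem blowup_ode_asymptotic_equivalence_RV (a γ : ℝ) (ha : 0 < a) (hγ : 1 < γ)
    (g h : ℝ → ℝ)
    (hgc : ContinuousOn g (Ici a)) (hhc : ContinuousOn h (Ici a))
    (hhpos : ∀ u, a ≤ u → 0 < h u) (hRV : IsRV h γ)
    (hlim : Tendsto (fun u => g u / h u) atTop (𝓝 1))
    (T : ℝ) (hT : 0 < T) (v w : ℝ → ℝ)
    (hva : ∀ t ∈ Ioc (0:ℝ) T, a ≤ v t) (hwa : ∀ t ∈ Ioc (0:ℝ) T, a ≤ w t)
    (hv : ∀ t ∈ Ioc (0:ℝ) T, HasDerivAt v (-(g (v t))) t)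
    (hw : ∀ t ∈ Ioc (0:ℝ) T, HasDerivAt w (-(h (w t))) t)
    (hv0 : Tendsto v (𝓝[>] (0:ℝ)) atTop) (hw0 : Tendsto w (𝓝[>] (0:ℝ)) atTop) :
    Tendsto (fun t => v t / w t) (𝓝[>] (0:ℝ)) (𝓝 1) := by
  -- extend `h` to a continuous positive function on the line
  set H : ℝ → ℝ := fun x => h (max a x) with hH
  have hHc : Continuous H := by
    rw [← continuousOn_univ]
    exact hhc.comp (by fun_prop) (fun x _ => le_max_left a x)
  have hHpos : ∀ x, 0 < H x := fun x => hhpos _ (le_max_left a x)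
  have hHe : ∀ x, a ≤ x → H x = h x := fun x hx => by simp only [hH, max_eq_right hx]
  have hHi : Continuous (fun x => (H x)⁻¹) := hHc.inv₀ (fun x => (hHpos x).ne')
  set G : ℝ → ℝ := fun u => ∫ x in a..u, (H x)⁻¹ with hG
  have hGd : ∀ u, HasDerivAt G ((H u)⁻¹) u := fun u =>
    (hHi.integral_hasStrictDerivAt a u).hasDerivAt
  have hGm : Monotone G := by
    apply monotone_of_deriv_nonneg (fun u => (hGd u).differentiableAt)
    intro u
    rw [(hGd u).deriv]
    exact (inv_pos.mpr (hHpos u)).le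
  -- `G (w t) + t` is constant
  have hK : ∀ t ∈ Ioo (0:ℝ) T, HasDerivAt (fun t => G (w t) + t) 0 t := by
    intro t ht
    have h1 := ((hGd (w t)).comp t (hw t ⟨ht.1, ht.2.le⟩)).add (hasDerivAt_id t)
    have h2 : (H (w t))⁻¹ * -(h (w t)) + 1 = 0 := by
      rw [hHe _ (hwa t ⟨ht.1, ht.2.le⟩)]
      have := (hhpos _ (hwa t ⟨ht.1, ht.2.le⟩)).ne'
      field_simp
      ring
    rw [h2] at h1
    exact h1
  obtain ⟨C, hC⟩ : ∃ C, ∀ t ∈ Ioo (0:ℝ) T, G (w t) + t = C := by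
    refine isOpen_Ioo.exists_is_const_of_deriv_eq_zero isPreconnected_Ioo
      (fun t ht => (hK t ht).differentiableAt.differentiableWithinAt)
      (fun t ht => (hK t ht).deriv)
  have hIoo : ∀ᶠ t in 𝓝[>] (0:ℝ), t ∈ Ioo (0:ℝ) T := Ioo_mem_nhdsGT hT
  have hid : Tendsto (fun t : ℝ => t) (𝓝[>] (0:ℝ)) (𝓝 0) := tendsto_nhdsWithin_of_tendsto_nhds tendsto_id
  have hGw : Tendsto (fun t => G (w t)) (𝓝[>] (0:ℝ)) (𝓝 C) := by
    have h1 : Tendsto (fun t : ℝ => C - t) (𝓝[>] (0:ℝ)) (𝓝 C) := by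
      simpa using hid.const_sub C
    refine h1.congr' ?_
    filter_upwards [hIoo] with t ht
    linarith [hC t ht]
  have hGC : Tendsto G atTop (𝓝 C) := by
    rcases tendsto_of_monotone hGm with h1 | ⟨l, h1⟩
    · exact absurd hGw (not_tendsto_nhds_of_tendsto_atTop (h1.comp hw0) C)
    · have := tendsto_nhds_unique (h1.comp hw0) hGw
      rwa [this] at h1
  set F : ℝ → ℝ := fun u => C - G u with hF
  have hFd : ∀ u, HasDerivAt F (-(H u)⁻¹) u := fun u => (hGd u).const_sub C
  have hFa : Antitone F := fun x y hxy => by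
    have := hGm hxy
    simp only [hF]; linarith
  have hF0 : Tendsto F atTop (𝓝 0) := by simpa using hGC.const_sub C
  have hFw : ∀ t ∈ Ioo (0:ℝ) T, F (w t) = t := fun t ht => by
    simp only [hF]; linarith [hC t ht]
  -- `F` is regularly varying of index `1 - γ`
  have hFRV : ∀ ξ : ℝ, 0 < ξ → Tendsto (fun u => F (ξ * u) / F u) atTop (𝓝 (ξ ^ (1 - γ))) := by
    intro ξ hξ
    have hm : Tendsto (fun u : ℝ => ξ * u) atTop atTop := tendsto_id.const_mul_atTop hξ
    refine HasDerivAt.lhopital_zero_atTop (f' := fun u => -(H (ξ * u))⁻¹ * ξ)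
      (g' := fun u => -(H u)⁻¹) (Eventually.of_forall fun u => ?_)
      (Eventually.of_forall hFd) (Eventually.of_forall fun u => ?_) (hF0.comp hm) hF0 ?_
    · have h1 : HasDerivAt (fun u : ℝ => ξ * u) ξ u := by
        simpa using (hasDerivAt_id u).const_mul ξ
      exact (hFd (ξ * u)).comp u h1
    · exact neg_ne_zero.mpr (inv_pos.mpr (hHpos u)).ne'
    · have h1 := ((hRV ξ hξ).inv₀ (Real.rpow_pos_of_pos hξ γ).ne').const_mul ξ
      have h2 : ξ * (ξ ^ γ)⁻¹ = ξ ^ (1 - γ) := by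
        rw [Real.rpow_sub hξ, Real.rpow_one, div_eq_mul_inv]
      rw [h2] at h1
      refine h1.congr' ?_
      filter_upwards [eventually_ge_atTop a, hm.eventually_ge_atTop a] with u hu hu'
      rw [hHe _ hu, hHe _ hu']
      have p1 := (hhpos _ hu).ne'
      have p2 := (hhpos _ hu').ne'
      field_simp
  -- `F (v t) ~ t`
  have hFv : Tendsto (fun t => F (v t) / t) (𝓝[>] (0:ℝ)) (𝓝 1) := by
    refine HasDerivAt.lhopital_zero_nhdsGT (f' := fun t => -(H (v t))⁻¹ * -(g (v t)))
      (g' := fun _ => 1) ?_ (Eventually.of_forall fun t => hasDerivAt_id t)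
      (Eventually.of_forall fun t => one_ne_zero) (hF0.comp hv0) hid ?_
    · filter_upwards [hIoo] with t ht
      exact (hFd (v t)).comp t (hv t ⟨ht.1, ht.2.le⟩)
    · refine (hlim.comp hv0).congr' ?_
      filter_upwards [hIoo] with t ht
      simp only [Function.comp]
      rw [hHe _ (hva t ⟨ht.1, ht.2.le⟩), div_one, neg_mul_neg, div_eq_mul_inv, mul_comm]
  have hFξ : ∀ ξ : ℝ, 0 < ξ →
      Tendsto (fun t => F (ξ * w t) / t) (𝓝[>] (0:ℝ)) (𝓝 (ξ ^ (1 - γ))) := by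
    intro ξ hξ
    refine ((hFRV ξ hξ).comp hw0).congr' ?_
    filter_upwards [hIoo] with t ht
    simp only [Function.comp]
    rw [hFw t ht]
  have hwpos : ∀ᶠ t in 𝓝[>] (0:ℝ), 0 < w t := hw0.eventually_gt_atTop 0
  rw [tendsto_order]
  constructor
  · intro c hc
    set ξ := max c (1 / 2) with hξd
    have hξ0 : 0 < ξ := lt_of_lt_of_le (by norm_num) (le_max_right _ _)
    have hξ1 : ξ < 1 := max_lt hc (by norm_num)
    have hlt : (1:ℝ) < ξ ^ (1 - γ) :=
      Real.one_lt_rpow_of_pos_of_lt_one_of_neg hξ0 hξ1 (by linarith)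
    filter_upwards [hFv.eventually_lt (hFξ ξ hξ0) hlt, hwpos, hIoo] with t h1 h2 h3
    rw [div_lt_div_iff_of_pos_right h3.1] at h1
    have h4 : ξ * w t < v t := by
      by_contra hcon
      exact absurd (hFa (not_lt.mp hcon)) (not_le.mpr h1)
    exact lt_of_le_of_lt (le_max_left _ _) ((lt_div_iff₀ h2).mpr h4)
  · intro c hc
    have hlt : c ^ (1 - γ) < (1:ℝ) := Real.rpow_lt_one_of_one_lt_of_neg hc (by linarith)
    have hc0 : 0 < c := by linarith
    filter_upwards [(hFξ c hc0).eventually_lt hFv hlt, hwpos, hIoo] with t h1 h2 h3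
    rw [div_lt_div_iff_of_pos_right h3.1] at h1
    rw [div_lt_iff₀ h2]
    by_contra hcon
    exact absurd (hFa (not_lt.mp hcon)) (not_le.mpr h1)
end
end

section
/- Let a > 0 and let g, h be continuous functions on [a,∞) with h positive on [a,∞) and h ∈ RV_γ for some γ > 1, and suppose lim_{u→∞} g(u)/h(u) = c for some constant c > 0. Let T > 0 and let v, w : (0,T] → [a,∞) be differentiable functions satisfying v'(t) = −g(v(t)) and w'(t) = −h(w(t)) for all t ∈ (0,T], with v(t) → ∞ and w(t) → ∞ as t → 0⁺. Then for any ν with 0 < ν < γ−1: if c ≤ 1 then c^{1/ν} ≤ liminf_{t→0⁺} w(t)/v(t) ≤ limsup_{t→0⁺} w(t)/v(t) ≤ 1, and if c > 1 then 1 ≤ liminf_{t→0⁺} w(t)/v(t) ≤ limsup_{t→0⁺} w(t)/v(t) ≤ c^{1/ν}. -/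
open Filter MeasureTheory Set Topology

noncomputable section

/-- Primitive of `1/h` on `[a,∞)`. -/
theorem exists_primitive (a : ℝ) (h : ℝ → ℝ) (hhc : ContinuousOn h (Ici a))
    (hhpos : ∀ u, a ≤ u → 0 < h u) :
    ∃ F : ℝ → ℝ, StrictMono F ∧ ∀ x, a ≤ x → HasDerivAt F (1 / h x) x := by
  have hcont : Continuous (fun u => 1 / h (max a u)) := by
    have h1 : Continuous (fun u => h (max a u)) := by
      apply hhc.comp_continuous (by fun_prop)
      intro x
      exact le_max_left a x
    exact continuous_const.div h1 (fun x => (hhpos _ (le_max_left a x)).ne')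
  have hd : ∀ x, HasDerivAt (fun x => ∫ u in a..x, 1 / h (max a u)) (1 / h (max a x)) x := by
    intro x
    exact intervalIntegral.integral_hasDerivAt_right (hcont.intervalIntegrable _ _)
      (hcont.stronglyMeasurableAtFilter _ _) hcont.continuousAt
  refine ⟨fun x => ∫ u in a..x, 1 / h (max a u), ?_, ?_⟩
  · apply strictMono_of_deriv_pos
    intro x
    rw [(hd x).deriv]
    exact one_div_pos.mpr (hhpos _ (le_max_left a x))
  · intro x hx
    have := hd x
    rwa [max_eq_right hx] at this

theorem monoOn_of_hasDeriv {f f' : ℝ → ℝ} {δ : ℝ}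
    (hf : ∀ t ∈ Ioc (0:ℝ) δ, HasDerivAt f (f' t) t) (hp : ∀ t ∈ Ioc (0:ℝ) δ, 0 ≤ f' t) :
    MonotoneOn f (Ioc 0 δ) := by
  apply monotoneOn_of_deriv_nonneg (convex_Ioc 0 δ)
  · exact fun t ht => (hf t ht).continuousAt.continuousWithinAt
  · exact fun t ht => (hf t (interior_subset ht)).differentiableAt.differentiableWithinAt
  · intro t ht
    rw [(hf t (interior_subset ht)).deriv]
    exact hp t (interior_subset ht)

theorem exists_delta {T : ℝ} (hT : 0 < T) {P : ℝ → Prop} (hP : ∀ᶠ t in 𝓝[>] (0:ℝ), P t) :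
    ∃ δ, 0 < δ ∧ δ ≤ T ∧ ∀ t ∈ Ioc (0:ℝ) δ, P t := by
  obtain ⟨u, hu, hs⟩ := (mem_nhdsGT_iff_exists_Ioc_subset).1 hP
  exact ⟨min u T, lt_min hu hT, min_le_right _ _,
    fun t ht => hs ⟨ht.1, ht.2.trans (min_le_left _ _)⟩⟩

theorem ratio_limit (a γ c : ℝ) (ha : 0 < a) (hγ : 1 < γ) (hc : 0 < c)
    (g h : ℝ → ℝ) (hhc : ContinuousOn h (Ici a))
    (hhpos : ∀ u, a ≤ u → 0 < h u)
    (hRV : ∀ ξ : ℝ, 0 < ξ → Tendsto (fun u => h (ξ * u) / h u) atTop (𝓝 (ξ ^ γ)))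
    (hlim : Tendsto (fun u => g u / h u) atTop (𝓝 c))
    (T : ℝ) (hT : 0 < T) (v w : ℝ → ℝ)
    (hva : ∀ t ∈ Ioc (0:ℝ) T, a ≤ v t) (hwa : ∀ t ∈ Ioc (0:ℝ) T, a ≤ w t)
    (hv : ∀ t ∈ Ioc (0:ℝ) T, HasDerivAt v (-(g (v t))) t)
    (hw : ∀ t ∈ Ioc (0:ℝ) T, HasDerivAt w (-(h (w t))) t)
    (hv0 : Tendsto v (𝓝[>] (0:ℝ)) atTop) (hw0 : Tendsto w (𝓝[>] (0:ℝ)) atTop) :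
    Tendsto (fun t => w t / v t) (𝓝[>] (0:ℝ)) (𝓝 (c ^ (1 / (γ - 1)))) := by
  obtain ⟨F, hFm, hFd⟩ := exists_primitive a h hhc hhpos
  have hTm : T ∈ Ioc (0:ℝ) T := ⟨hT, le_rfl⟩
  obtain ⟨L, hL⟩ : ∃ L, ∀ t ∈ Ioc (0:ℝ) T, F (w t) = L - t := by
    have hd : ∀ t ∈ Ioc (0:ℝ) T, HasDerivAt (fun t => F (w t) + t) 0 t := by
      intro t ht
      have h1 := ((hFd _ (hwa t ht)).comp t (hw t ht)).add (hasDerivAt_id t)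
      refine HasDerivAt.congr_deriv (f := fun t => F (w t) + t) h1 ?_
      have := (hhpos _ (hwa t ht)).ne'
      field_simp
      ring
    have hd2 : ∀ t ∈ Ioc (0:ℝ) T, HasDerivAt (fun t => -(F (w t) + t)) 0 t := by
      intro t ht
      exact HasDerivAt.congr_deriv (f := fun t => -(F (w t) + t)) (hd t ht).neg neg_zero
    have m1 := monoOn_of_hasDeriv (f' := fun _ => 0) hd (fun _ _ => le_rfl)
    have m2 := monoOn_of_hasDeriv (f' := fun _ => 0) hd2 (fun _ _ => le_rfl)
    refine ⟨F (w T) + T, fun t ht => ?_⟩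
    have e1 := m1 ht hTm ht.2
    have e2 := m2 ht hTm ht.2
    simp only at e1 e2
    linarith
  have hIoc : ∀ᶠ t in 𝓝[>] (0:ℝ), t ∈ Ioc (0:ℝ) T := Ioc_mem_nhdsGT hT
  have hid : Tendsto (fun t : ℝ => t) (𝓝[>] (0:ℝ)) (𝓝 0) := tendsto_nhdsWithin_of_tendsto_nhds tendsto_id
  have hFw : Tendsto (fun t => F (w t)) (𝓝[>] (0:ℝ)) (𝓝 L) := by
    have h1 : Tendsto (fun t : ℝ => L - t) (𝓝[>] (0:ℝ)) (𝓝 (L - 0)) := hid.const_sub L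
    rw [sub_zero] at h1
    apply h1.congr'
    filter_upwards [hIoc] with t ht
    exact (hL t ht).symm
  have hFtop : Tendsto F atTop (𝓝 L) := by
    have hb : BddAbove (range F) := by
      refine ⟨L, ?_⟩
      rintro _ ⟨x, rfl⟩
      obtain ⟨t, ht1, ht2⟩ := ((hw0.eventually_ge_atTop x).and hIoc).exists
      have := hFm.monotone ht1
      have := hL t ht2
      linarith [ht2.1]
    have h1 := tendsto_atTop_ciSup hFm.monotone hb
    have h2 := tendsto_nhds_unique (h1.comp hw0) hFw
    rwa [h2] at h1
  -- the scaled function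
  have hz0 : ∀ l : ℝ, 0 < l → Tendsto (fun t => l * v t) (𝓝[>] (0:ℝ)) atTop :=
    fun l hl => hv0.const_mul_atTop hl
  have hR : ∀ l : ℝ, 0 < l → Tendsto (fun t => l * g (v t) / h (l * v t)) (𝓝[>] (0:ℝ))
      (𝓝 (l * c / l ^ γ)) := by
    intro l hl
    have h1 : Tendsto (fun u => l * (g u / h u) / (h (l * u) / h u)) atTop
        (𝓝 (l * c / l ^ γ)) :=
      (hlim.const_mul l).div (hRV l hl) (Real.rpow_pos_of_pos hl γ).ne'
    refine (h1.comp hv0).congr' ?_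
    filter_upwards [hIoc, (hz0 l hl).eventually_ge_atTop a] with t ht hz
    have := (hhpos _ (hva t ht)).ne'
    have := (hhpos _ hz).ne'
    simp only [Function.comp]
    field_simp
  have hzd : ∀ l k : ℝ, ∀ t ∈ Ioc (0:ℝ) T, a ≤ l * v t →
      HasDerivAt (fun t => F (l * v t) + k * t) (k - l * g (v t) / h (l * v t)) t := by
    intro l k t ht hz
    have h1 := ((hFd _ hz).comp t ((hv t ht).const_mul l)).add ((hasDerivAt_id t).const_mul k)
    refine HasDerivAt.congr_deriv (f := fun t => F (l * v t) + k * t) h1 ?_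
    ring
  have hlimz : ∀ l k : ℝ, 0 < l →
      Tendsto (fun t => F (l * v t) + k * t) (𝓝[>] (0:ℝ)) (𝓝 L) := by
    intro l k hl
    simpa using (hFtop.comp (hz0 l hl)).add (hid.const_mul k)
  have upper : ∀ l : ℝ, 0 < l → l * c / l ^ γ < 1 → ∀ᶠ t in 𝓝[>] (0:ℝ), w t < l * v t := by
    intro l hl hlt
    obtain ⟨k, hk1, hk2⟩ := exists_between hlt
    obtain ⟨δ, hδ, hδT, hP⟩ := exists_delta hT
      (((hR l hl).eventually_lt_const hk1).and ((hz0 l hl).eventually_ge_atTop a))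
    have m := monoOn_of_hasDeriv
      (fun t ht => hzd l k t ⟨ht.1, ht.2.trans hδT⟩ (hP t ht).2)
      (fun t ht => sub_nonneg.2 (hP t ht).1.le)
    filter_upwards [Ioc_mem_nhdsGT hδ] with t ht
    have h1 : L ≤ F (l * v t) + k * t := by
      apply le_of_tendsto (hlimz l k hl)
      filter_upwards [Ioc_mem_nhdsGT ht.1] with s hs
      exact m ⟨hs.1, hs.2.trans ht.2⟩ ht hs.2
    have h2 := hL t ⟨ht.1, ht.2.trans hδT⟩
    apply hFm.lt_iff_lt.1
    nlinarith [ht.1]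
  have lower : ∀ l : ℝ, 0 < l → 1 < l * c / l ^ γ → ∀ᶠ t in 𝓝[>] (0:ℝ), l * v t < w t := by
    intro l hl hlt
    obtain ⟨k, hk1, hk2⟩ := exists_between hlt
    obtain ⟨δ, hδ, hδT, hP⟩ := exists_delta hT
      (((hR l hl).eventually_const_lt hk2).and ((hz0 l hl).eventually_ge_atTop a))
    have m := monoOn_of_hasDeriv
      (fun t ht => (hzd l k t ⟨ht.1, ht.2.trans hδT⟩ (hP t ht).2).neg)
      (fun t ht => by have := (hP t ht).1; linarith)
    filter_upwards [Ioc_mem_nhdsGT hδ] with t ht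
    have h1 : F (l * v t) + k * t ≤ L := by
      apply ge_of_tendsto (hlimz l k hl)
      filter_upwards [Ioc_mem_nhdsGT ht.1] with s hs
      have := m ⟨hs.1, hs.2.trans ht.2⟩ ht hs.2
      simp only [Pi.neg_apply] at this
      linarith
    have h2 := hL t ⟨ht.1, ht.2.trans hδT⟩
    apply hFm.lt_iff_lt.1
    nlinarith [ht.1]
  have hg1 : 0 < γ - 1 := by linarith
  have hpow : ∀ l : ℝ, 0 < l → l * c / l ^ γ = c / l ^ (γ - 1) := by
    intro l hl
    rw [Real.rpow_sub_one hl.ne']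
    have := (Real.rpow_pos_of_pos hl γ).ne'
    field_simp
  have hcpos : 0 < c ^ (1 / (γ - 1)) := Real.rpow_pos_of_pos hc _
  have hcc : (c ^ (1 / (γ - 1))) ^ (γ - 1) = c := by
    rw [← Real.rpow_mul hc.le, one_div_mul_cancel hg1.ne', Real.rpow_one]
  rw [tendsto_order]
  constructor
  · intro b hb
    obtain ⟨l, hl1, hl2⟩ := exists_between (max_lt hb hcpos)
    have hl0 : 0 < l := (le_max_right _ _).trans_lt hl1
    have hbl : b < l := (le_max_left _ _).trans_lt hl1
    have key : 1 < l * c / l ^ γ := by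
      rw [hpow l hl0, one_lt_div (Real.rpow_pos_of_pos hl0 _)]
      calc l ^ (γ - 1) < (c ^ (1 / (γ - 1))) ^ (γ - 1) := Real.rpow_lt_rpow hl0.le hl2 hg1
        _ = c := hcc
    filter_upwards [lower l hl0 key, hIoc] with t h1 ht
    have hvp : 0 < v t := ha.trans_le (hva t ht)
    exact hbl.trans ((lt_div_iff₀ hvp).2 h1)
  · intro b hb
    have hl0 : 0 < b := hcpos.trans hb
    have key : b * c / b ^ γ < 1 := by
      rw [hpow b hl0, div_lt_one (Real.rpow_pos_of_pos hl0 _)]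
      calc c = (c ^ (1 / (γ - 1))) ^ (γ - 1) := hcc.symm
        _ < b ^ (γ - 1) := Real.rpow_lt_rpow hcpos.le hb hg1
    filter_upwards [upper b hl0 key, hIoc] with t h1 ht
    have hvp : 0 < v t := ha.trans_le (hva t ht)
    exact (div_lt_iff₀ hvp).2 h1

/-- Let `h ∈ RV_γ`, `γ > 1`, be positive and continuous on `[a,∞)`, `g` continuous
on `[a,∞)` with `g/h → c > 0` at infinity. If `v, w` solve `v' = -g(v)`, `w' = -h(w)`
on `(0,T]` with `v, w → ∞` as `t → 0⁺`, then for any `0 < ν < γ - 1`: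
if `c ≤ 1` then `c^{1/ν} ≤ liminf_{t→0⁺} w/v ≤ limsup_{t→0⁺} w/v ≤ 1`, and
if `c > 1` then `1 ≤ liminf_{t→0⁺} w/v ≤ limsup_{t→0⁺} w/v ≤ c^{1/ν}`. -/
theorem blowup_ode_comparison (a γ c : ℝ) (ha : 0 < a) (hγ : 1 < γ) (hc : 0 < c)
    (g h : ℝ → ℝ)
    (hgc : ContinuousOn g (Ici a)) (hhc : ContinuousOn h (Ici a))
    (hhpos : ∀ u, a ≤ u → 0 < h u) (hRV : IsRV h γ)
    (hlim : Tendsto (fun u => g u / h u) atTop (𝓝 c))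
    (T : ℝ) (hT : 0 < T) (v w : ℝ → ℝ)
    (hva : ∀ t ∈ Ioc (0:ℝ) T, a ≤ v t) (hwa : ∀ t ∈ Ioc (0:ℝ) T, a ≤ w t)
    (hv : ∀ t ∈ Ioc (0:ℝ) T, HasDerivAt v (-(g (v t))) t)
    (hw : ∀ t ∈ Ioc (0:ℝ) T, HasDerivAt w (-(h (w t))) t)
    (hv0 : Tendsto v (𝓝[>] (0:ℝ)) atTop) (hw0 : Tendsto w (𝓝[>] (0:ℝ)) atTop) :
    ∀ ν : ℝ, 0 < ν → ν < γ - 1 →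
      (c ≤ 1 →
        c ^ (1 / ν) ≤ liminf (fun t => w t / v t) (𝓝[>] (0:ℝ)) ∧
        liminf (fun t => w t / v t) (𝓝[>] (0:ℝ)) ≤
          limsup (fun t => w t / v t) (𝓝[>] (0:ℝ)) ∧
        limsup (fun t => w t / v t) (𝓝[>] (0:ℝ)) ≤ 1) ∧
      (1 < c →
        1 ≤ liminf (fun t => w t / v t) (𝓝[>] (0:ℝ)) ∧
        liminf (fun t => w t / v t) (𝓝[>] (0:ℝ)) ≤
          limsup (fun t => w t / v t) (𝓝[>] (0:ℝ)) ∧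
        limsup (fun t => w t / v t) (𝓝[>] (0:ℝ)) ≤ c ^ (1 / ν)) := by
  intro ν hν hνγ
  have hlimit := ratio_limit a γ c ha hγ hc g h hhc hhpos hRV hlim T hT v w hva hwa hv hw hv0 hw0
  rw [hlimit.liminf_eq, hlimit.limsup_eq]
  have hg1 : 0 < γ - 1 := by linarith
  have hexp : 1 / (γ - 1) ≤ 1 / ν := one_div_le_one_div_of_le hν hνγ.le
  have hpos : 0 ≤ 1 / (γ - 1) := by positivity
  refine ⟨fun hc1 => ⟨?_, le_rfl, ?_⟩, fun hc1 => ⟨?_, le_rfl, ?_⟩⟩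
  · exact Real.rpow_le_rpow_of_exponent_ge hc hc1 hexp
  · exact Real.rpow_le_one hc.le hc1 hpos
  · exact Real.one_le_rpow hc1.le hpos
  · exact Real.rpow_le_rpow_of_exponent_le hc1.le hexp
end
end
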